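/- arXiv:1708.09351 — 2 statements merged into one kernel-verified Lean document; each statement's English description precedes it below -/
import Mathlib

section
/- Consider a finite directed graph (N,E) whose underlying undirected graph is connected, for each bus j ∈ N a function f_j : ℝ^{n_j} × ℝ → ℝ^{n_j}, and hysteresis thresholds 0 < ω⁰_j < ω¹_j. Suppose a point (η*, ω*, x^{s,*}, σ*) satisfies: ω*_i − ω*_j = 0 for every edge (i,j) ∈ E; f_j(x^{s,*}_j, −ω*_j) = 0 for every j ∈ N; σ*_j ∈ I_j(ω*_j) for every j ∈ N; and there exists a bus j̄ ∈ N such that for all x̄ ∈ ℝ^{n_{j̄}} and ω̄ ∈ ℝ, f_{j̄}(x̄, −ω̄) = 0 implies ω̄ = 0. Then ω*_j = 0 and σ*_j = 0 for every j ∈ N. -/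
/-- `sgn(ω) = 1` for `ω ≥ 0` and `sgn(ω) = −1` for `ω < 0`. -/
noncomputable def hsgn (ω : ℝ) : ℝ := if 0 ≤ ω then 1 else -1

/-- The hysteresis consistency map with thresholds `0 < ω⁰ < ω¹`:
`I(ω) = {sgn ω}` if `|ω| > ω¹`, `I(ω) = {0}` if `|ω| < ω⁰`,
and `I(ω) = {0, sgn ω}` if `ω⁰ ≤ |ω| ≤ ω¹`. -/
noncomputable def hystI (w0 w1 ω : ℝ) : Set ℝ :=
  if w1 < |ω| then {hsgn ω}
  else if |ω| < w0 then {0}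
  else {0, hsgn ω}

section GraphConstancy

variable {V α : Type*} {φ : V → α}

theorem apply_eq_of_reachable {G : SimpleGraph V} (hφ : ∀ u v, G.Adj u v → φ u = φ v)
    {u v : V} (huv : G.Reachable u v) : φ u = φ v := by
  obtain ⟨p⟩ := huv
  induction p with
  | nil => rfl
  | cons huw _ ih => exact (hφ _ _ huw).trans ih

theorem apply_eq_of_preconnected_fromRel {r : V → V → Prop}
    (hr : (SimpleGraph.fromRel r).Preconnected) (hφ : ∀ u v, r u v → φ u = φ v) (u v : V) :
    φ u = φ v := by
  refine apply_eq_of_reachable (fun a b hab ↦ ?_) (hr u v)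
  rcases ((SimpleGraph.fromRel_adj r a b).mp hab).2 with h | h
  · exact hφ a b h
  · exact (hφ b a h).symm

end GraphConstancy

theorem hystI_zero {w0 w1 : ℝ} (hw0 : 0 < w0) (hw1 : 0 ≤ w1) : hystI w0 w1 0 = {0} := by
  rw [hystI, abs_zero, if_neg hw1.not_gt, if_pos hw0]

theorem stmt_1_general {N : Type*} {X Y : N → Type*} [∀ j, Zero (Y j)] {E : Set (N × N)}
    (hconn : (SimpleGraph.fromRel fun i j ↦ (i, j) ∈ E).Preconnected)
    (f : ∀ j, X j → ℝ → Y j) {w0 w1 : N → ℝ} (hw0 : ∀ j, 0 < w0 j) (hw1 : ∀ j, 0 ≤ w1 j)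
    {ω : N → ℝ} {x : ∀ j, X j} {σ : N → ℝ}
    (hω : ∀ i j, (i, j) ∈ E → ω i - ω j = 0)
    (hf : ∀ j, f j (x j) (-ω j) = 0)
    (hσ : ∀ j, σ j ∈ hystI (w0 j) (w1 j) (ω j))
    (hbar : ∃ b, ∀ (xb : X b) (wb : ℝ), f b xb (-wb) = 0 → wb = 0) (j : N) :
    ω j = 0 ∧ σ j = 0 := by
  obtain ⟨b, hb⟩ := hbar
  have hωb : ω b = 0 := hb (x b) (ω b) (hf b)
  have hsync : ω j = ω b :=
    apply_eq_of_preconnected_fromRel hconn (fun u v huv ↦ sub_eq_zero.mp (hω u v huv)) j b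
  have hωj : ω j = 0 := hsync.trans hωb
  have hσj : σ j ∈ ({0} : Set ℝ) := by
    simpa only [hωj, hystI_zero (hw0 j) (hw1 j)] using hσ j
  exact ⟨hωj, hσj⟩

/-- Characterization of equilibria of the hybrid power network system with hysteretic
on-off loads: the equilibrium frequency deviations and switching states are zero. -/
theorem stmt_1 {N : Type*} [Fintype N] (E : Set (N × N))
    (hconn : (SimpleGraph.fromRel (fun i j => (i, j) ∈ E)).Connected)
    (n : N → ℕ)
    (f : ∀ j : N, (Fin (n j) → ℝ) → ℝ → (Fin (n j) → ℝ))
    (w0 w1 : N → ℝ) (hw0 : ∀ j, 0 < w0 j) (hw01 : ∀ j, w0 j < w1 j)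
    (ηstar : {e : N × N // e ∈ E} → ℝ) (ωstar : N → ℝ)
    (xstar : ∀ j : N, Fin (n j) → ℝ) (σstar : N → ℝ)
    (heq1 : ∀ i j : N, (i, j) ∈ E → ωstar i - ωstar j = 0)
    (heq2 : ∀ j : N, f j (xstar j) (-ωstar j) = 0)
    (hσ : ∀ j : N, σstar j ∈ hystI (w0 j) (w1 j) (ωstar j))
    (hbar : ∃ jbar : N, ∀ (xb : Fin (n jbar) → ℝ) (wb : ℝ),
      f jbar xb (-wb) = 0 → wb = 0) :
    ∀ j : N, ωstar j = 0 ∧ σstar j = 0 :=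
  stmt_1_general hconn.preconnected f hw0 (fun j ↦ ((hw0 j).trans (hw01 j)).le) heq1 heq2 hσ hbar
end

section
/- Let (N,E) be a finite directed graph, M_j > 0 for j ∈ N, B_{ij} > 0 for (i,j) ∈ E, and suppose the real parameters p^L_j, s*_j, η*_{ij} satisfy −p^L_j + s*_j − Σ_{k:(j,k)∈E} B_{jk} sin η*_{jk} + Σ_{i:(i,j)∈E} B_{ij} sin η*_{ij} = 0 for every j ∈ N. Let η : ℝ → ℝ^E and ω : ℝ → ℝ^N be differentiable functions and s, v : ℝ → ℝ^N arbitrary functions such that for all t: (d/dt)η_{ij}(t) = ω_i(t) − ω_j(t) for all (i,j) ∈ E, and M_j (d/dt)ω_j(t) = −p^L_j + s_j(t) − v_j(t) − Σ_{k:(j,k)∈E} B_{jk} sin η_{jk}(t) + Σ_{i:(i,j)∈E} B_{ij} sin η_{ij}(t) for all j ∈ N. Then for all t, (d/dt) V̄(η(t), ω(t)) = Σ_{j∈N} ω_j(t)(s_j(t) − s*_j) − Σ_{j∈N} ω_j(t) v_j(t), where V̄(η, ω) = (1/2) Σ_{j∈N} M_j ω_j² + Σ_{(i,j)∈E} B_{ij}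 (cos η*_{ij} − cos η_{ij} − (η_{ij} − η*_{ij}) sin η*_{ij}). -/
/-- The Lyapunov function `V̄ = V_F + V_P` of the paper, with kinetic part
`V_F(ω) = (1/2) Σ_j M_j ω_j²` and potential part
`V_P(η) = Σ_{(i,j)∈E} B_{ij} (cos η*_{ij} − cos η_{ij} − (η_{ij} − η*_{ij}) sin η*_{ij})`. -/
noncomputable def Vbar {N : Type*} [Fintype N] (E : Finset (N × N))
    (M : N → ℝ) (B ηstar : N × N → ℝ) (ηf : N × N → ℝ) (ωf : N → ℝ) : ℝ :=
  (1 / 2) * (∑ j : N, M j * (ωf j) ^ 2) +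
    ∑ e ∈ E, B e *
      (Real.cos (ηstar e) - Real.cos (ηf e) - (ηf e - ηstar e) * Real.sin (ηstar e))

/-!
Along any differentiable trajectory, the chain rule gives
`V̄' = ∑ j, ω j * (M j * ω' j) + ∑ e, η' e * (B e * (sin (η e) - sin (η* e)))`.
Subtracting the equilibrium balance from the swing equation cancels the loads and leaves at each
bus the net outflow of `B e * (sin (η e) - sin (η* e))`. Since `η'` is the difference of `ω` across
each line, summation by parts cancels this outflow against the potential term, and only the terms
in `s - s*` and `v` survive.
-/

section NetOutflow

variable {ι N R : Type*} [DecidableEq N]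

/-- The net outflow (discrete divergence) at the vertex `j` of the edge flow `f`, in the directed
multigraph with edges `E` and endpoint maps `src` and `tgt`. -/
def netOutflow [AddCommGroup R] (src tgt : ι → N) (E : Finset ι) (f : ι → R) (j : N) : R :=
  ∑ e ∈ E with src e = j, f e - ∑ e ∈ E with tgt e = j, f e

theorem netOutflow_sub [AddCommGroup R] (src tgt : ι → N) (E : Finset ι) (f g : ι → R) (j : N) :
    netOutflow src tgt E (fun e => f e - g e) j =
      netOutflow src tgt E f j - netOutflow src tgt E g j := by
  simp only [netOutflow, Finset.sum_sub_distrib]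
  abel

theorem sum_mul_sum_fiberwise [Fintype N] [NonUnitalNonAssocSemiring R] (E : Finset ι) (g : ι → N)
    (w : N → R) (f : ι → R) :
    ∑ j, w j * ∑ e ∈ E with g e = j, f e = ∑ e ∈ E, w (g e) * f e := by
  rw [← Finset.sum_fiberwise E g]
  refine Finset.sum_congr rfl fun j _ => ?_
  rw [Finset.mul_sum]
  refine Finset.sum_congr rfl fun e he => ?_
  rw [(Finset.mem_filter.mp he).2]

theorem sum_mul_netOutflow [Fintype N] [NonUnitalNonAssocRing R] (src tgt : ι → N) (E : Finset ι)
    (w : N → R) (f : ι → R) :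
    ∑ j, w j * netOutflow src tgt E f j = ∑ e ∈ E, (w (src e) - w (tgt e)) * f e := by
  simp only [netOutflow, mul_sub, sub_mul, Finset.sum_sub_distrib, sum_mul_sum_fiberwise]

end NetOutflow

theorem hasDerivAt_cos_sub_cos_sub_mul_sin (a x : ℝ) :
    HasDerivAt (fun y => Real.cos a - Real.cos y - (y - a) * Real.sin a)
      (Real.sin x - Real.sin a) x := by
  have h_linear := ((hasDerivAt_id' x).sub_const a).mul_const (Real.sin a)
  simpa using ((Real.hasDerivAt_cos x).const_sub (Real.cos a)).fun_sub h_linear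

section Energy

variable {S : Set ℝ} {t : ℝ}

theorem hasDerivWithinAt_kineticEnergy {N : Type*} [Fintype N] (M : N → ℝ) {ω : ℝ → N → ℝ}
    {ω' : N → ℝ} (hω : ∀ j, HasDerivWithinAt (fun τ => ω τ j) (ω' j) S t) :
    HasDerivWithinAt (fun τ => (1 / 2) * ∑ j, M j * ω τ j ^ 2)
      (∑ j, ω t j * (M j * ω' j)) S t := by
  simp only [Finset.mul_sum]
  refine HasDerivWithinAt.fun_sum fun j _ => ?_
  refine ((((hω j).fun_pow 2).const_mul (M j)).const_mul (1 / 2)).congr_deriv ?_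
  ring

theorem hasDerivWithinAt_potentialEnergy {ι : Type*} {E : Finset ι} (B ηstar : ι → ℝ)
    {η : ℝ → ι → ℝ} {η' : ι → ℝ}
    (hη : ∀ e ∈ E, HasDerivWithinAt (fun τ => η τ e) (η' e) S t) :
    HasDerivWithinAt
      (fun τ => ∑ e ∈ E, B e * (Real.cos (ηstar e) - Real.cos (η τ e) -
        (η τ e - ηstar e) * Real.sin (ηstar e)))
      (∑ e ∈ E, η' e * (B e * (Real.sin (η t e) - Real.sin (ηstar e)))) S t := by
  refine HasDerivWithinAt.fun_sum fun e he => ?_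
  have h_edge := (hasDerivAt_cos_sub_cos_sub_mul_sin (ηstar e) (η t e)).comp_hasDerivWithinAt t
    (hη e he)
  exact (h_edge.const_mul (B e)).congr_deriv (by ring)

theorem hasDerivWithinAt_Vbar {N : Type*} [Fintype N] {E : Finset (N × N)} (M : N → ℝ)
    (B ηstar : N × N → ℝ) {η : ℝ → N × N → ℝ} {η' : N × N → ℝ} {ω : ℝ → N → ℝ} {ω' : N → ℝ}
    (hη : ∀ e ∈ E, HasDerivWithinAt (fun τ => η τ e) (η' e) S t)
    (hω : ∀ j, HasDerivWithinAt (fun τ => ω τ j) (ω' j) S t) :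
    HasDerivWithinAt (fun τ => Vbar E M B ηstar (η τ) (ω τ))
      (∑ j, ω t j * (M j * ω' j) +
        ∑ e ∈ E, η' e * (B e * (Real.sin (η t e) - Real.sin (ηstar e)))) S t :=
  (hasDerivWithinAt_kineticEnergy M hω).add (hasDerivWithinAt_potentialEnergy B ηstar hη)

end Energy

theorem stmt_11_general {N : Type*} [Fintype N] [DecidableEq N] {E : Finset (N × N)}
    {M : N → ℝ} {B ηstar : N × N → ℝ} {pL sstar : N → ℝ}
    {η : ℝ → N × N → ℝ} {ω : ℝ → N → ℝ} {ω' s v : N → ℝ} {S : Set ℝ} {t : ℝ}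
    (hbal : ∀ j, -pL j + sstar j
      - (∑ e ∈ E with e.1 = j, B e * Real.sin (ηstar e))
      + (∑ e ∈ E with e.2 = j, B e * Real.sin (ηstar e)) = 0)
    (hη : ∀ e ∈ E, HasDerivWithinAt (fun τ => η τ e) (ω t e.1 - ω t e.2) S t)
    (hω : ∀ j, HasDerivWithinAt (fun τ => ω τ j) (ω' j) S t)
    (hswing : ∀ j, M j * ω' j = -pL j + s j - v j
      - (∑ e ∈ E with e.1 = j, B e * Real.sin (η t e))
      + (∑ e ∈ E with e.2 = j, B e * Real.sin (η t e))) :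
    HasDerivWithinAt (fun τ => Vbar E M B ηstar (η τ) (ω τ))
      ((∑ j, ω t j * (s j - sstar j)) - ∑ j, ω t j * v j) S t := by
  let flowDeviation (e : N × N) : ℝ := B e * (Real.sin (η t e) - Real.sin (ηstar e))
  have h_deviation (j : N) :
      M j * ω' j = (s j - sstar j) - v j - netOutflow Prod.fst Prod.snd E flowDeviation j := by
    simp only [flowDeviation, mul_sub, netOutflow_sub]
    simp only [netOutflow]
    linear_combination hswing j + hbal j
  refine (hasDerivWithinAt_Vbar M B ηstar hη hω).congr_deriv ?_
  rw [← sum_mul_netOutflow Prod.fst Prod.snd E (ω t) flowDeviation]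
  simp only [h_deviation, mul_sub, Finset.sum_sub_distrib]
  ring

/-- Derivative of the Lyapunov function `V̄` along solutions of the swing equations:
`(d/dt) V̄(η(t), ω(t)) = Σ_j ω_j(t)(s_j(t) − s*_j) − Σ_j ω_j(t) v_j(t)`. -/
theorem stmt_11 {N : Type*} [Fintype N] [DecidableEq N] (E : Finset (N × N))
    (M : N → ℝ) (B ηstar : N × N → ℝ) (pL sstar : N → ℝ)
    (η : ℝ → N × N → ℝ) (ω ω' s v : ℝ → N → ℝ)
    (hM : ∀ j : N, 0 < M j) (hB : ∀ e ∈ E, 0 < B e)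
    (hbal : ∀ j : N, -pL j + sstar j
      - (∑ e ∈ E.filter (fun e => e.1 = j), B e * Real.sin (ηstar e))
      + (∑ e ∈ E.filter (fun e => e.2 = j), B e * Real.sin (ηstar e)) = 0)
    (hη : ∀ t : ℝ, ∀ e ∈ E, HasDerivAt (fun τ => η τ e) (ω t e.1 - ω t e.2) t)
    (hω : ∀ (t : ℝ) (j : N), HasDerivAt (fun τ => ω τ j) (ω' t j) t)
    (hswing : ∀ (t : ℝ) (j : N), M j * ω' t j = -pL j + s t j - v t j
      - (∑ e ∈ E.filter (fun e => e.1 = j), B e * Real.sin (η t e))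
      + (∑ e ∈ E.filter (fun e => e.2 = j), B e * Real.sin (η t e))) :
    ∀ t : ℝ, HasDerivAt (fun τ => Vbar E M B ηstar (η τ) (ω τ))
      ((∑ j : N, ω t j * (s t j - sstar j)) - ∑ j : N, ω t j * v t j) t := by
  intro t
  simpa only [hasDerivWithinAt_univ] using stmt_11_general (S := Set.univ) hbal
    (fun e he => (hη t e he).hasDerivWithinAt) (fun j => (hω t j).hasDerivWithinAt) (hswing t)
end
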